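/- For every k, the sequence 0 → D^k → H^k_BC → H^k_∂̄ → E^k → F^k → 0 is exact, where D^k → H^k_BC and H^k_BC → H^k_∂̄ are induced by the inclusions of representatives, H^k_∂̄ → E^k is induced by the identity on representatives, and E^k → F^k is induced by the quotient projection on representatives (Varouchas exact sequence). -/

import Mathlib

open Submodule LinearMap Module

section Setup

variable (U : ℤ → Type*) [∀ k, AddCommGroup (U k)] [∀ k, Module ℂ (U k)]

/-- The identification `U a → U b` induced by an equality `a = b` of degrees. -/
def castU {a b : ℤ} (h : a = b) : U a →ₗ[ℂ] U b := by subst h; exact LinearMap.id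

variable (D : ∀ k : ℤ, U k →ₗ[ℂ] U (k + 1)) (Db : ∀ k : ℤ, U k →ₗ[ℂ] U (k - 1))

/-- The composite `∂∂̄ : U^k → U^{k-1} → U^k`. -/
def ddbar (k : ℤ) : U k →ₗ[ℂ] U k :=
  (castU U (show k - 1 + 1 = k by ring)).comp ((D (k - 1)).comp (Db k))

/-- `ker ∂ ∩ U^k` -/
def kerD (k : ℤ) : Submodule ℂ (U k) := LinearMap.ker (D k)

/-- `ker ∂̄ ∩ U^k` -/
def kerDb (k : ℤ) : Submodule ℂ (U k) := LinearMap.ker (Db k)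

/-- `∂(U^{k-1})` -/
def imD (k : ℤ) : Submodule ℂ (U k) :=
  LinearMap.range ((castU U (show k - 1 + 1 = k by ring)).comp (D (k - 1)))

/-- `∂̄(U^{k+1})` -/
def imDb (k : ℤ) : Submodule ℂ (U k) :=
  LinearMap.range ((castU U (show k + 1 - 1 = k by ring)).comp (Db (k + 1)))

/-- `ker (∂∂̄) ∩ U^k` -/
def kerDDbar (k : ℤ) : Submodule ℂ (U k) := LinearMap.ker (ddbar U D Db k)

/-- `(∂∂̄)(U^k)` -/
def imDDbar (k : ℤ) : Submodule ℂ (U k) := LinearMap.range (ddbar U D Db k)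

end Setup

/-- The quotient of a submodule `p` by (the preimage in `p` of) a submodule `q`. -/
abbrev SubQuot {V : Type*} [AddCommGroup V] [Module ℂ V] (p q : Submodule ℂ V) :=
  ↥p ⧸ q.comap p.subtype

/-- The map `p/q → p'/q'` induced by the identity (inclusion) on representatives. -/
def qmap {V : Type*} [AddCommGroup V] [Module ℂ V] {p p' q q' : Submodule ℂ V}
    (hp : p ≤ p') (hq : q ≤ q') : SubQuot p q →ₗ[ℂ] SubQuot p' q' :=
  Submodule.mapQ _ _ (Submodule.inclusion hp) fun x hx => by
    simp only [Submodule.mem_comap, Submodule.subtype_apply, Submodule.coe_inclusion] at hx ⊢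
    exact hq hx

section Cohomology

variable (U : ℤ → Type*) [∀ k, AddCommGroup (U k)] [∀ k, Module ℂ (U k)]
variable (D : ∀ k : ℤ, U k →ₗ[ℂ] U (k + 1)) (Db : ∀ k : ℤ, U k →ₗ[ℂ] U (k - 1))

/-- `H^k_∂ = (ker ∂ ∩ U^k)/∂(U^{k-1})` -/
abbrev Hd (k : ℤ) := SubQuot (kerD U D k) (imD U D k)

/-- `H^k_∂̄ = (ker ∂̄ ∩ U^k)/∂̄(U^{k+1})` -/
abbrev Hdb (k : ℤ) := SubQuot (kerDb U Db k) (imDb U Db k)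

/-- `H^k_BC = (ker ∂ ∩ ker ∂̄ ∩ U^k)/(∂∂̄)(U^k)` -/
abbrev HBC (k : ℤ) := SubQuot (kerD U D k ⊓ kerDb U Db k) (imDDbar U D Db k)

/-- `H^k_A = (ker (∂∂̄) ∩ U^k)/(∂(U^{k-1}) + ∂̄(U^{k+1}))` -/
abbrev HA (k : ℤ) := SubQuot (kerDDbar U D Db k) (imD U D k ⊔ imDb U Db k)

/-- `A^k = (∂(U^{k-1}) ∩ ∂̄(U^{k+1}))/(∂∂̄)(U^k)` -/
abbrev Avar (k : ℤ) := SubQuot (imD U D k ⊓ imDb U Db k) (imDDbar U D Db k)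

/-- `B^k = (ker ∂̄ ∩ ∂(U^{k-1}))/(∂∂̄)(U^k)` -/
abbrev Bvar (k : ℤ) := SubQuot (kerDb U Db k ⊓ imD U D k) (imDDbar U D Db k)

/-- `C^k = (ker (∂∂̄) ∩ U^k)/((ker ∂̄ ∩ U^k) + ∂(U^{k-1}))` -/
abbrev Cvar (k : ℤ) := SubQuot (kerDDbar U D Db k) (kerDb U Db k ⊔ imD U D k)

/-- `D^k = (ker ∂ ∩ ∂̄(U^{k+1}))/(∂∂̄)(U^k)` -/
abbrev Dvar (k : ℤ) := SubQuot (kerD U D k ⊓ imDb U Db k) (imDDbar U D Db k)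

/-- `E^k = (ker (∂∂̄) ∩ U^k)/((ker ∂ ∩ U^k) + ∂̄(U^{k+1}))` -/
abbrev Evar (k : ℤ) := SubQuot (kerDDbar U D Db k) (kerD U D k ⊔ imDb U Db k)

/-- `F^k = (ker (∂∂̄) ∩ U^k)/((ker ∂ ∩ U^k) + (ker ∂̄ ∩ U^k))` -/
abbrev Fvar (k : ℤ) := SubQuot (kerDDbar U D Db k) (kerD U D k ⊔ kerDb U Db k)

end Cohomology
section InducedMapLemmas

variable (U : ℤ → Type*) [∀ k, AddCommGroup (U k)] [∀ k, Module ℂ (U k)]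
variable (D : ∀ k : ℤ, U k →ₗ[ℂ] U (k + 1)) (Db : ∀ k : ℤ, U k →ₗ[ℂ] U (k - 1))

lemma Db_castU {a b : ℤ} (h : a = b) (x : U a) :
    Db b (castU U h x) = castU U (show a - 1 = b - 1 by rw [h]) (Db a x) := by
  subst h; rfl

lemma imDb_le_kerDb (hDb2 : ∀ k : ℤ, (Db (k - 1)).comp (Db k) = 0) (k : ℤ) :
    imDb U Db k ≤ kerDb U Db k := by
  rintro x ⟨y, rfl⟩
  have h0 : Db (k + 1 - 1) (Db (k + 1) y) = 0 := by
    simpa using DFunLike.congr_fun (hDb2 (k + 1)) y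
  simp only [kerDb, LinearMap.mem_ker, LinearMap.comp_apply, Db_castU, h0, map_zero]

lemma imDDbar_le_imDb
    (hanti : ∀ k : ℤ, ddbar U D Db k
      + (castU U (show k + 1 - 1 = k by ring)).comp ((Db (k + 1)).comp (D k)) = 0)
    (k : ℤ) : imDDbar U D Db k ≤ imDb U Db k := by
  rintro x ⟨y, rfl⟩
  refine ⟨-(D k y), ?_⟩
  have h := DFunLike.congr_fun (hanti k) y
  simp only [LinearMap.add_apply, LinearMap.comp_apply, LinearMap.zero_apply] at h
  simp only [LinearMap.comp_apply, map_neg]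
  exact neg_eq_of_add_eq_zero_left h

lemma kerDb_le_kerDDbar (k : ℤ) : kerDb U Db k ≤ kerDDbar U D Db k := by
  intro x hx
  have hx' : Db k x = 0 := hx
  simp only [kerDDbar, LinearMap.mem_ker, ddbar, LinearMap.comp_apply, hx', map_zero]

end InducedMapLemmas
section Maps

variable (U : ℤ → Type*) [∀ k, AddCommGroup (U k)] [∀ k, Module ℂ (U k)]
variable (D : ∀ k : ℤ, U k →ₗ[ℂ] U (k + 1)) (Db : ∀ k : ℤ, U k →ₗ[ℂ] U (k - 1))
variable (hDb2 : ∀ k : ℤ, (Db (k - 1)).comp (Db k) = 0)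
variable (hanti : ∀ k : ℤ, ddbar U D Db k
  + (castU U (show k + 1 - 1 = k by ring)).comp ((Db (k + 1)).comp (D k)) = 0)

/-- `D^k → H^k_BC`, induced by the inclusion of representatives. -/
def mapDH (k : ℤ) : Dvar U D Db k →ₗ[ℂ] HBC U D Db k :=
  qmap (le_inf inf_le_left (inf_le_right.trans (imDb_le_kerDb U Db hDb2 k))) le_rfl

/-- `H^k_BC → H^k_∂̄`, induced by the inclusion of representatives. -/
def mapBCH (k : ℤ) : HBC U D Db k →ₗ[ℂ] Hdb U Db k :=
  qmap inf_le_right (imDDbar_le_imDb U D Db hanti k)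

/-- `H^k_∂̄ → E^k`, induced by the identity on representatives. -/
def mapHE (k : ℤ) : Hdb U Db k →ₗ[ℂ] Evar U D Db k :=
  qmap (kerDb_le_kerDDbar U D Db k) le_sup_right

/-- `E^k → F^k`, induced by the quotient projection on representatives. -/
def mapEF (k : ℤ) : Evar U D Db k →ₗ[ℂ] Fvar U D Db k :=
  qmap le_rfl (sup_le le_sup_left ((imDb_le_kerDb U Db hDb2 k).trans le_sup_right))

end Maps

/-!
Write `a = ker ∂`, `b = ker ∂̄`, `c = im ∂̄`, `r = im ∂∂̄` and `s = ker ∂∂̄` for the submodules of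
`U^k`; then `r ≤ c ≤ b ≤ s`. All maps are induced by the identity of `U^k`, so exactness at each
spot is a relation in the lattice of submodules. The crucial one is the modular law
`b ⊓ (a ⊔ c) = (b ⊓ a) ⊔ c`, which gives exactness at `H^k_∂̄ = b / c`.
-/

section MapQ

variable {R M N P : Type*} [Ring R] [AddCommGroup M] [Module R M] [AddCommGroup N] [Module R N]
  [AddCommGroup P] [Module R P] {p : Submodule R M} {q : Submodule R N} {r : Submodule R P}
  {f : M →ₗ[R] N} {g : N →ₗ[R] P}

theorem mapQ_injective_iff (hf : p ≤ q.comap f) :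
    Function.Injective (p.mapQ q f hf) ↔ q.comap f ≤ p := by
  rw [← ker_eq_bot, ker_mapQ, ← le_ker_iff_map, ker_mkQ]

theorem mapQ_surjective_iff (hf : p ≤ q.comap f) :
    Function.Surjective (p.mapQ q f hf) ↔ range f ⊔ q = ⊤ := by
  rw [← range_eq_top, range_mapQ, ← (comap_injective_of_surjective q.mkQ_surjective).eq_iff,
    comap_map_mkQ, comap_top, sup_comm]

theorem exact_mapQ_mapQ_iff (hf : p ≤ q.comap f) (hg : q ≤ r.comap g) :
    Function.Exact (p.mapQ q f hf) (q.mapQ r g hg) ↔ r.comap g = range f ⊔ q := by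
  rw [LinearMap.exact_iff, ker_mapQ, range_mapQ,
    ← (comap_injective_of_surjective q.mkQ_surjective).eq_iff, comap_map_mkQ, comap_map_mkQ,
    sup_eq_right.mpr hg, sup_comm]

end MapQ

theorem map_subtype_range_inclusion_sup_comap {R M : Type*} [Ring R] [AddCommGroup M]
    [Module R M] {p p' : Submodule R M} (q : Submodule R M) (hp : p ≤ p') :
    (range (inclusion hp) ⊔ q.comap p'.subtype).map p'.subtype = p' ⊓ (p ⊔ q) := by
  rw [Submodule.map_sup, map_subtype_range_inclusion, map_comap_subtype, inf_comm p' q,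
    inf_comm p', sup_inf_assoc_of_le q hp]

section Subquotient

variable {V : Type*} [AddCommGroup V] [Module ℂ V] {p p' p'' q q' q'' : Submodule ℂ V}

theorem qmap_injective_iff (hp : p ≤ p') (hq : q ≤ q') :
    Function.Injective (qmap hp hq) ↔ p ⊓ q' ≤ q := by
  refine (mapQ_injective_iff _).trans ?_
  change q'.comap p.subtype ≤ q.comap p.subtype ↔ _
  rw [comap_subtype_le_iff, le_inf_iff, and_iff_right inf_le_left]

theorem qmap_surjective_iff (hp : p ≤ p') (hq : q ≤ q') :
    Function.Surjective (qmap hp hq) ↔ p' ≤ p ⊔ q' := by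
  refine (mapQ_surjective_iff _).trans ?_
  rw [← (map_injective_of_injective p'.subtype_injective).eq_iff,
    map_subtype_range_inclusion_sup_comap, map_subtype_top, inf_eq_left]

theorem exact_qmap_qmap_iff (hp : p ≤ p') (hq : q ≤ q') (hp' : p' ≤ p'') (hq' : q' ≤ q'') :
    Function.Exact (qmap hp hq) (qmap hp' hq') ↔ p' ⊓ q'' = p' ⊓ (p ⊔ q') := by
  refine (exact_mapQ_mapQ_iff _ _).trans ?_
  change q''.comap p'.subtype = _ ↔ _
  rw [← (map_injective_of_injective p'.subtype_injective).eq_iff, map_comap_subtype,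
    map_subtype_range_inclusion_sup_comap]

theorem varouchas_exact_sequence_two_general {a b c r s : Submodule ℂ V}
    (hrc : r ≤ c) (hcb : c ≤ b) (hbs : b ≤ s) :
    let i : SubQuot (a ⊓ c) r →ₗ[ℂ] SubQuot (a ⊓ b) r := qmap (inf_le_inf_left a hcb) le_rfl
    let j : SubQuot (a ⊓ b) r →ₗ[ℂ] SubQuot b c := qmap inf_le_right hrc
    let u : SubQuot b c →ₗ[ℂ] SubQuot s (a ⊔ c) := qmap hbs le_sup_right
    let v : SubQuot s (a ⊔ c) →ₗ[ℂ] SubQuot s (a ⊔ b) := qmap le_rfl (sup_le_sup_left hcb a)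
    Function.Injective i ∧ Function.Exact i j ∧ Function.Exact j u ∧ Function.Exact u v ∧
      Function.Surjective v := by
  have exact_at_BC : a ⊓ b ⊓ c = a ⊓ b ⊓ (a ⊓ c ⊔ r) :=
    le_antisymm (le_inf inf_le_left (le_sup_of_le_left (inf_le_inf_right c inf_le_left)))
      (inf_le_inf_left (a ⊓ b) (sup_le inf_le_right hrc))
  have exact_at_Hdb : b ⊓ (a ⊔ c) = b ⊓ (a ⊓ b ⊔ c) :=
    calc b ⊓ (a ⊔ c) = b ⊓ a ⊔ c := (inf_sup_assoc_of_le a hcb).symm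
      _ = b ⊓ (a ⊓ b) ⊔ c := by rw [inf_eq_right.mpr (inf_le_right : a ⊓ b ≤ b), inf_comm]
      _ = b ⊓ (a ⊓ b ⊔ c) := inf_sup_assoc_of_le (a ⊓ b) hcb
  have exact_at_E : s ⊓ (a ⊔ b) = s ⊓ (b ⊔ (a ⊔ c)) := by
    rw [sup_left_comm, sup_eq_left.mpr hcb]
  exact ⟨(qmap_injective_iff _ _).mpr inf_le_right, (exact_qmap_qmap_iff _ _ _ _).mpr exact_at_BC,
    (exact_qmap_qmap_iff _ _ _ _).mpr exact_at_Hdb, (exact_qmap_qmap_iff _ _ _ _).mpr exact_at_E,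
    (qmap_surjective_iff _ _).mpr le_sup_left⟩

end Subquotient

/-- the Varouchas sequence `0 → D^k → H^k_BC → H^k_∂̄ → E^k → F^k → 0`
is exact. -/
theorem varouchas_exact_sequence_two
    (n : ℕ) (U : ℤ → Type*) [∀ k, AddCommGroup (U k)] [∀ k, Module ℂ (U k)]
    (hvan : ∀ k : ℤ, (n : ℤ) < |k| → ∀ x : U k, x = 0)
    (D : ∀ k : ℤ, U k →ₗ[ℂ] U (k + 1)) (Db : ∀ k : ℤ, U k →ₗ[ℂ] U (k - 1))
    (hD2 : ∀ k : ℤ, (D (k + 1)).comp (D k) = 0)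
    (hDb2 : ∀ k : ℤ, (Db (k - 1)).comp (Db k) = 0)
    (hanti : ∀ k : ℤ, ddbar U D Db k
      + (castU U (show k + 1 - 1 = k by ring)).comp ((Db (k + 1)).comp (D k)) = 0)
    (k : ℤ) :
    Function.Injective ⇑(mapDH U D Db hDb2 k) ∧
    Function.Exact ⇑(mapDH U D Db hDb2 k) ⇑(mapBCH U D Db hanti k) ∧
    Function.Exact ⇑(mapBCH U D Db hanti k) ⇑(mapHE U D Db k) ∧
    Function.Exact ⇑(mapHE U D Db k) ⇑(mapEF U D Db hDb2 k) ∧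
    Function.Surjective ⇑(mapEF U D Db hDb2 k) :=
  varouchas_exact_sequence_two_general (imDDbar_le_imDb U D Db hanti k)
    (imDb_le_kerDb U Db hDb2 k) (kerDb_le_kerDDbar U D Db k)
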